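/- In the two-mode noisy interferometry setting, any symmetric L_x with V L_x V + Ω L_x Ω = ∂_x V satisfies ℱ_{xx} := (1/2)·tr( (∂_x V) · L_x ) + 2·(∂_x d)ᵀ V⁻¹ (∂_x d) = (1/(2x²))·[ (x² − y² + 1)² / ( 2 x y cosh(2r) + x² + y² − 1 ) − ( (x − y)² + 1 )·( (x + y)² + 1 ) / ( 2 x y cosh(2r) + x² + y² + 1 ) + 4 a² x / (x + y) + 2 ] + 2 a² ( e^{2r} − 1 ) / ( (x + y)·( y e^{2r} + x ) ). -/

import Mathlib

open Matrix

noncomputable section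

/-- The standard symplectic form on two modes (4×4). -/
def Omega4 : Matrix (Fin 4) (Fin 4) ℝ :=
  !![0, 1, 0, 0; -1, 0, 0, 0; 0, 0, 0, 1; 0, 0, -1, 0]

/-- Covariance matrix of the two-mode squeezed input with squeezing parameter `r`. -/
def V0 (r : ℝ) : Matrix (Fin 4) (Fin 4) ℝ :=
  !![Real.cosh (2*r), 0, Real.sinh (2*r), 0;
     0, Real.cosh (2*r), 0, -Real.sinh (2*r);
     Real.sinh (2*r), 0, Real.cosh (2*r), 0;
     0, -Real.sinh (2*r), 0, Real.cosh (2*r)]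

/-- Input displacement `√2·(0, a, 0, a)ᵀ` of the optimal probe. -/
def d0 (a : ℝ) : Fin 4 → ℝ := ![0, Real.sqrt 2 * a, 0, Real.sqrt 2 * a]

/-- Phase rotations by `±φ/2` on the two modes. -/
def Sphase (φ : ℝ) : Matrix (Fin 4) (Fin 4) ℝ :=
  !![Real.cos (φ/2), Real.sin (φ/2), 0, 0;
     -Real.sin (φ/2), Real.cos (φ/2), 0, 0;
     0, 0, Real.cos (φ/2), -Real.sin (φ/2);
     0, 0, Real.sin (φ/2), Real.cos (φ/2)]

/-- Evolved covariance matrix `x·S_φ V₀ S_φᵀ + y·𝟙₄`. -/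
def Vm (r φ x y : ℝ) : Matrix (Fin 4) (Fin 4) ℝ :=
  x • (Sphase φ * V0 r * (Sphase φ)ᵀ) + y • (1 : Matrix (Fin 4) (Fin 4) ℝ)

/-- Evolved displacement `√x·S_φ d₀`. -/
def dm (a φ x : ℝ) : Fin 4 → ℝ := Real.sqrt x • (Sphase φ).mulVec (d0 a)

/-- Entrywise partial derivative of `Vm` with respect to `φ`. -/
def dVdphi (r φ x y : ℝ) : Matrix (Fin 4) (Fin 4) ℝ :=
  Matrix.of fun i j => deriv (fun t => Vm r t x y i j) φ

/-- Entrywise partial derivative of `Vm` with respect to `x`. -/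
def dVdx (r φ x y : ℝ) : Matrix (Fin 4) (Fin 4) ℝ :=
  Matrix.of fun i j => deriv (fun t => Vm r φ t y i j) x

/-- Entrywise partial derivative of `Vm` with respect to `y`. -/
def dVdy (r φ x y : ℝ) : Matrix (Fin 4) (Fin 4) ℝ :=
  Matrix.of fun i j => deriv (fun t => Vm r φ x t i j) y

/-- Entrywise partial derivative of `dm` with respect to `φ`. -/
def ddphi (a φ x : ℝ) : Fin 4 → ℝ := fun i => deriv (fun t => dm a t x i) φ

/-- Entrywise partial derivative of `dm` with respect to `x`. -/
def ddx (a φ x : ℝ) : Fin 4 → ℝ := fun i => deriv (fun t => dm a φ t i) x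

/-- Entrywise partial derivative of `dm` with respect to `y` (the displacement does
not depend on `y`). -/
def ddy (a φ x y : ℝ) : Fin 4 → ℝ := fun i => deriv (fun _t : ℝ => dm a φ x i) y

def X0m : Matrix (Fin 4) (Fin 4) ℝ :=
  !![0, 0, 1, 0; 0, 0, 0, -1; 1, 0, 0, 0; 0, -1, 0, 0]

def Gm (φ : ℝ) : Matrix (Fin 4) (Fin 4) ℝ := Sphase φ * X0m * (Sphase φ)ᵀ

lemma S_mul_ST (φ : ℝ) : Sphase φ * (Sphase φ)ᵀ = 1 := by
  have h := Real.sin_sq_add_cos_sq (φ/2)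
  ext i j
  fin_cases i <;> fin_cases j <;>
    simp [Sphase, Matrix.mul_apply, Fin.sum_univ_four] <;> linarith

lemma ST_mul_S (φ : ℝ) : (Sphase φ)ᵀ * Sphase φ = 1 :=
  mul_eq_one_comm.mp (S_mul_ST φ)

lemma X0_sq : X0m * X0m = 1 := by
  ext i j
  fin_cases i <;> fin_cases j <;> simp [X0m, Matrix.mul_apply, Fin.sum_univ_four]

lemma Gm_sq (φ : ℝ) : Gm φ * Gm φ = 1 := by
  have : Gm φ * Gm φ = Sphase φ * (X0m * ((Sphase φ)ᵀ * Sphase φ) * X0m) * (Sphase φ)ᵀ := by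
    simp only [Gm, Matrix.mul_assoc]
  rw [this, ST_mul_S, Matrix.mul_one, X0_sq, Matrix.mul_one, S_mul_ST]

lemma S_V0 (r φ : ℝ) : Sphase φ * V0 r * (Sphase φ)ᵀ
    = Real.cosh (2*r) • (1 : Matrix (Fin 4) (Fin 4) ℝ) + Real.sinh (2*r) • Gm φ := by
  have : V0 r = Real.cosh (2*r) • (1 : Matrix (Fin 4) (Fin 4) ℝ) + Real.sinh (2*r) • X0m := by
    ext i j
    fin_cases i <;> fin_cases j <;> simp [V0, X0m]
  rw [this, Matrix.mul_add, Matrix.add_mul]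
  simp [Gm, S_mul_ST]

lemma Om_S (φ : ℝ) : Omega4 * Sphase φ = Sphase φ * Omega4 := by
  ext i j
  fin_cases i <;> fin_cases j <;> simp [Omega4, Sphase, Matrix.mul_apply, Fin.sum_univ_four]

lemma Om_ST (φ : ℝ) : (Sphase φ)ᵀ * Omega4 = Omega4 * (Sphase φ)ᵀ := by
  ext i j
  fin_cases i <;> fin_cases j <;> simp [Omega4, Sphase, Matrix.mul_apply, Fin.sum_univ_four]

lemma Om_X : Omega4 * X0m * Omega4 = X0m := by
  ext i j
  fin_cases i <;> fin_cases j <;> simp [Omega4, X0m, Matrix.mul_apply, Fin.sum_univ_four]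

lemma Om_sq : Omega4 * Omega4 = -1 := by
  ext i j
  fin_cases i <;> fin_cases j <;> simp [Omega4, Matrix.mul_apply, Fin.sum_univ_four]

lemma Om_G (φ : ℝ) : Omega4 * Gm φ * Omega4 = Gm φ := by
  have : Omega4 * Gm φ * Omega4 = (Omega4 * Sphase φ) * X0m * ((Sphase φ)ᵀ * Omega4) := by
    simp only [Gm, Matrix.mul_assoc]
  rw [this, Om_S, Om_ST]
  have : Sphase φ * Omega4 * X0m * (Omega4 * (Sphase φ)ᵀ)
      = Sphase φ * (Omega4 * X0m * Omega4) * (Sphase φ)ᵀ := by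
    simp only [Matrix.mul_assoc]
  rw [this, Om_X, Gm]

lemma tr_G (φ : ℝ) : (Gm φ).trace = 0 := by
  rw [Gm, Matrix.trace_mul_comm, ← Matrix.mul_assoc, ST_mul_S, Matrix.one_mul]
  simp [X0m, Matrix.trace, Fin.sum_univ_four]

lemma G_mulVec (a φ : ℝ) : (Gm φ).mulVec ((Sphase φ).mulVec (d0 a))
    = - (Sphase φ).mulVec (d0 a) := by
  rw [Matrix.mulVec_mulVec]
  have : Gm φ * Sphase φ = Sphase φ * X0m := by
    rw [Gm, Matrix.mul_assoc, ST_mul_S, Matrix.mul_one]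
  rw [this, ← Matrix.mulVec_mulVec, ← Matrix.mulVec_neg]
  congr 1
  ext i
  fin_cases i <;> simp [X0m, d0, Matrix.mulVec, dotProduct, Fin.sum_univ_four]

lemma Vm_eq (r φ x y : ℝ) : Vm r φ x y
    = (x * Real.cosh (2*r) + y) • (1 : Matrix (Fin 4) (Fin 4) ℝ)
      + (x * Real.sinh (2*r)) • Gm φ := by
  rw [Vm, S_V0]; module

lemma dVdx_eq (r φ x y : ℝ) : dVdx r φ x y
    = Real.cosh (2*r) • (1 : Matrix (Fin 4) (Fin 4) ℝ) + Real.sinh (2*r) • Gm φ := by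
  rw [← S_V0]
  ext i j
  simp only [dVdx, Matrix.of_apply, Vm, Matrix.add_apply, Matrix.smul_apply, smul_eq_mul]
  generalize (Sphase φ * V0 r * (Sphase φ)ᵀ) i j = m
  have : HasDerivAt (fun t : ℝ => t * m + y * (1 : Matrix (Fin 4) (Fin 4) ℝ) i j) (1 * m) x :=
    ((hasDerivAt_id x).mul_const m).add_const _
  rw [this.deriv, one_mul]

lemma ddx_eq (a φ x : ℝ) (hx : 0 < x) : ddx a φ x
    = (1 / (2 * Real.sqrt x)) • (Sphase φ).mulVec (d0 a) := by
  ext i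
  simp only [ddx, dm, Pi.smul_apply, smul_eq_mul]
  exact ((Real.hasDerivAt_sqrt hx.ne').mul_const _).deriv

lemma dd_norm (a φ : ℝ) :
    (Sphase φ).mulVec (d0 a) ⬝ᵥ (Sphase φ).mulVec (d0 a) = 4 * a^2 := by
  rw [Matrix.dotProduct_mulVec, Matrix.vecMul_mulVec, ST_mul_S, Matrix.vecMul_one]
  simp [d0, dotProduct, Fin.sum_univ_four]
  have := Real.mul_self_sqrt (show (0:ℝ) ≤ 2 by norm_num)
  linear_combination 2 * a^2 * this

lemma comb_mul (φ a b c d : ℝ) :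
    (a • (1 : Matrix (Fin 4) (Fin 4) ℝ) + b • Gm φ) * (c • 1 + d • Gm φ)
      = (a * c + b * d) • 1 + (a * d + b * c) • Gm φ := by
  simp only [Matrix.add_mul, Matrix.mul_add, Matrix.smul_mul, Matrix.mul_smul, Gm_sq,
    Matrix.one_mul, Matrix.mul_one]
  module

lemma comb_Om (φ a b : ℝ) :
    Omega4 * (a • (1 : Matrix (Fin 4) (Fin 4) ℝ) + b • Gm φ) * Omega4
      = (-a) • 1 + b • Gm φ := by
  simp only [Matrix.add_mul, Matrix.mul_add, Matrix.smul_mul, Matrix.mul_smul, Om_G,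
    Matrix.mul_one, Om_sq]
  module

lemma comb_tr (φ a b : ℝ) :
    (a • (1 : Matrix (Fin 4) (Fin 4) ℝ) + b • Gm φ).trace = 4 * a := by
  rw [Matrix.trace_add, Matrix.trace_smul, Matrix.trace_smul, tr_G]
  simp [mul_comm]

lemma tr_swap (V K L D : Matrix (Fin 4) (Fin 4) ℝ)
    (hK : V * K * V + Omega4 * K * Omega4 = D)
    (hL : V * L * V + Omega4 * L * Omega4 = D) : (D * L).trace = (D * K).trace := by
  have e : ∀ W : Matrix (Fin 4) (Fin 4) ℝ, (W * K * W * L).trace = (W * L * W * K).trace := by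
    intro W
    rw [Matrix.mul_assoc (W * K), Matrix.trace_mul_comm, ← Matrix.mul_assoc]
  calc (D * L).trace = ((V * K * V + Omega4 * K * Omega4) * L).trace := by rw [hK]
    _ = ((V * L * V + Omega4 * L * Omega4) * K).trace := by
      rw [Matrix.add_mul, Matrix.add_mul, Matrix.trace_add, Matrix.trace_add, e, e]
    _ = _ := by rw [hL]

theorem qfi_x_x (r a φ x y : ℝ) (hr : 0 ≤ r) (hx : 0 < x) (hy : |1 - x| < y)
    (L : Matrix (Fin 4) (Fin 4) ℝ) (hLsymm : L.IsSymm)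
    (hL : Vm r φ x y * L * Vm r φ x y + Omega4 * L * Omega4 = dVdx r φ x y) :
    (1/2) * (dVdx r φ x y * L).trace
      + 2 * (ddx a φ x ⬝ᵥ (Vm r φ x y)⁻¹.mulVec (ddx a φ x)) =
    (1 / (2 * x^2)) *
      ( (x^2 - y^2 + 1)^2 / (2 * x * y * Real.cosh (2*r) + x^2 + y^2 - 1)
        - ((x - y)^2 + 1) * ((x + y)^2 + 1)
            / (2 * x * y * Real.cosh (2*r) + x^2 + y^2 + 1)
        + 4 * a^2 * x / (x + y) + 2 )
    + 2 * a^2 * (Real.exp (2*r) - 1)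
        / ((x + y) * (y * Real.exp (2*r) + x)) := by
  have hxy : 1 < x + y := by
    have := (abs_lt.mp hy).2
    linarith [le_abs_self (1 - x)]
  have hy0 : 0 < y := lt_of_le_of_lt (abs_nonneg _) hy
  have hc1 : 1 ≤ Real.cosh (2*r) := Real.one_le_cosh _
  have hcs : Real.cosh (2*r) ^ 2 - Real.sinh (2*r) ^ 2 = 1 := Real.cosh_sq_sub_sinh_sq _
  have hE : 0 < Real.exp (2*r) := Real.exp_pos _
  have hEc : Real.exp (2*r) * (Real.cosh (2*r) - Real.sinh (2*r)) = 1 := by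
    rw [Real.cosh_sub_sinh, ← Real.exp_add]; simp
  rw [dVdx_eq] at hL ⊢
  rw [Vm_eq] at hL ⊢
  rw [ddx_eq a φ x hx]
  generalize Real.cosh (2*r) = c at *
  generalize Real.sinh (2*r) = s at *
  generalize Real.exp (2*r) = E at *
  have hD1 : 0 < 2 * x * y * c + x^2 + y^2 - 1 := by
    nlinarith [mul_pos hx hy0, mul_nonneg (mul_pos hx hy0).le (sub_nonneg.2 hc1)]
  have hD2 : 0 < 2 * x * y * c + x^2 + y^2 + 1 := by linarith
  obtain ⟨A, hA⟩ : ∃ A, A = x * c + y := ⟨_, rfl⟩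
  obtain ⟨B, hB⟩ : ∃ B, B = x * s := ⟨_, rfl⟩
  rw [← hA, ← hB] at hL ⊢
  obtain ⟨D, hD⟩ : ∃ D, D = 2 * x * y * c + x^2 + y^2 := ⟨_, rfl⟩
  have hAB : A^2 - B^2 = D := by
    rw [hA, hB, hD]; linear_combination x^2 * hcs
  rw [← hD] at hD1 hD2 ⊢
  have hDD : D^2 - 1 ≠ 0 := by
    have : D^2 - 1 = (D-1)*(D+1) := by ring
    rw [this]; positivity
  -- trace part
  have hK := tr_swap _ ((((c * (A^2+B^2+1) - 2*A*B*s)/(D^2-1)) • (1 : Matrix (Fin 4) (Fin 4) ℝ)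
      + ((s * (A^2+B^2-1) - 2*A*B*c)/(D^2-1)) • Gm φ)) L _ (by
    rw [comb_mul, comb_mul, comb_Om]
    rw [show ∀ p q u v : ℝ, (p • (1 : Matrix (Fin 4) (Fin 4) ℝ) + q • Gm φ) + (u • 1 + v • Gm φ)
      = (p + u) • 1 + (q + v) • Gm φ from fun p q u v => by module]
    congr 2
    · field_simp
      rw [← hAB]; ring
    · field_simp
      rw [← hAB]; ring) hL
  rw [hK, comb_mul, comb_tr]
  -- displacement part
  have hABm : A - B ≠ 0 := by
    intro h
    have : D = 0 := by rw [← hAB]; linear_combination (A+B) * h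
    linarith
  have hinv : (A • (1 : Matrix (Fin 4) (Fin 4) ℝ) + B • Gm φ)⁻¹
      = (A / D) • (1 : Matrix (Fin 4) (Fin 4) ℝ) + (-B / D) • Gm φ := by
    apply Matrix.inv_eq_right_inv
    have hD0 : D ≠ 0 := by linarith
    rw [comb_mul, show A * (A / D) + B * (-B / D) = 1 by field_simp; linarith,
      show A * (-B / D) + B * (A / D) = 0 by field_simp; ring]
    simp
  have hsx : Real.sqrt x ^ 2 = x := Real.sq_sqrt hx.le
  have hsx0 : Real.sqrt x ≠ 0 := (Real.sqrt_pos.2 hx).ne'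
  rw [hinv, Matrix.mulVec_smul, Matrix.add_mulVec, Matrix.smul_mulVec, Matrix.smul_mulVec,
    G_mulVec, Matrix.one_mulVec]
  simp only [smul_dotProduct, dotProduct_smul, dotProduct_add, dotProduct_neg, dd_norm, smul_eq_mul]
  have hdisp : 2 * (1 / (2 * Real.sqrt x) * (1 / (2 * Real.sqrt x)
      * (A / D * (4 * a^2) + -B / D * -(4 * a^2))))
      = (1 / (2 * x^2)) * (4 * a^2 * x / (x + y))
        + 2 * a^2 * (E - 1) / ((x + y) * (y * E + x)) := by
    have h1 : A / D * (4 * a^2) + -B / D * -(4 * a^2) = 4 * a^2 * E / (y * E + x) := by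
      have hD0 : D ≠ 0 := by linarith
      have h2 : E * (A - B) = y * E + x := by
        rw [hA, hB]; linear_combination x * hEc
      have hp : y * E + x ≠ 0 := by positivity
      rw [← h2] at hp ⊢
      have hE0 := hE.ne'
      field_simp
      rw [← hAB]; ring
    rw [h1]
    have hp : y * E + x ≠ 0 := by positivity
    have hp2 : x + y ≠ 0 := by positivity
    have h3 : ∀ z : ℝ, 2 * (1 / (2 * Real.sqrt x) * (1 / (2 * Real.sqrt x) * z))
        = z / (2 * x) := by
      intro z
      rw [← hsx]
      rw [Real.sqrt_sq (Real.sqrt_nonneg x)]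
      field_simp
      try norm_num
    rw [h3]
    field_simp
    ring
  have htr : (1/2) * (4 * (c * ((c * (A^2+B^2+1) - 2*A*B*s)/(D^2-1))
        + s * ((s * (A^2+B^2-1) - 2*A*B*c)/(D^2-1))))
      = (1 / (2 * x^2)) * ((x^2 - y^2 + 1)^2 / (D - 1)
        - ((x - y)^2 + 1) * ((x + y)^2 + 1) / (D + 1) + 2) := by
    have n1 : c * (c * (A^2+B^2+1) - 2*A*B*s) + s * (s * (A^2+B^2-1) - 2*A*B*c)
      = x^2 + y^2 * (c^2+s^2) + 2*x*y*c + 1 := by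
      have hs : s^2 = c^2 - 1 := by linarith
      have hs4 : s^4 = (c^2-1)^2 := by rw [← hs]; ring
      rw [hA, hB]; ring_nf; rw [hs4, hs]; ring
    have n2 : x^2 * (c^2 + s^2) * y^2 * 2 = (D - x^2 - y^2)^2 - 2 * x^2 * y^2 := by
      rw [hD]; linear_combination (-2 * x^2*y^2) * hcs
    have n3 : x^2 + y^2 * (c^2+s^2) + 2*x*y*c + 1
       = (2 * x^2 * (D - y^2 + 1) + (D - x^2 - y^2)^2 - 2*x^2*y^2) / (2*x^2) := by
      rw [eq_div_iff (by positivity)]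
      rw [hD] at n2 ⊢
      linear_combination n2
    have e1 : c * ((c * (A^2+B^2+1) - 2*A*B*s)/(D^2-1)) + s * ((s * (A^2+B^2-1) - 2*A*B*c)/(D^2-1))
      = (c * (c * (A^2+B^2+1) - 2*A*B*s) + s * (s * (A^2+B^2-1) - 2*A*B*c))/(D^2-1) := by ring
    rw [e1, n1, n3]
    have hx0 := hx.ne'
    have q1 := hD1.ne'
    have q2 := hD2.ne'
    rw [show D^2 - 1 = (D-1)*(D+1) by ring]
    field_simp
    ring
  linear_combination htr + hdisp
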